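/- Let q be a power of a prime p, let k, f be positive integers with f | k and k > f > 1, and let D = {x ∈ F_{q^k}^* : Tr_{q^f/q}(x^{(q^k-1)/(q^f-1)}) = 0}. Let χ₁ be the canonical additive character of F_{q^f} and let φ be a multiplicative character of F_{q^f}^* of order (q^f-1)/(q-1). Then for every b ∈ F_{q^k}^*, the Hamming weight w(c_b) = #{d ∈ D : Tr_{q^k/q}(b d) ≠ 0} satisfies (as an equality of complex numbers) w(c_b) = (q-1)q^{k-2}(q^f - q)/(q^f - 1) − ((-1)^{k/f-1} q^f (q-1)²/(q²(q^f-1))) · Σ_{j=1}^{(q^f-1)/(q-1) - 1} φ^j(-1) G(φ^j, χ₁)^{k/f - 1} conj(φ^j)(b^{(q^k-1)/(q^f-1)}). -/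

import Mathlib

open scoped BigOperators

/-!
The weight is controlled by the character sums of the defining set `D`. The characters `φ ^ j` are
those of `F_{q^f}ˣ` which are trivial on `F_qˣ`, so a sum of an additive character over `F_qˣ` is an
average of the Gauss sums of the `φ ^ j`; this turns the condition that `N(x)` has trace zero into
a combination of the values `φ ^ j (N x)`. The character sums of `D` thereby become combinations of
Gauss sums over `F_{q^k}` of the lifted characters `φ ^ j ∘ N`, and the Hasse–Davenport relation
expresses these through Gauss sums over `F_{q^f}`.

For the Hasse–Davenport relation, `χ` and `ψ` define a multiplicative function of monic
polynomials. The sums `hₙ` of this function over the monic polynomials of degree `n` satisfy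
Newton's identities with the lifted Gauss sums over the extensions of degree `n` as power sums `pₙ`,
because both sides count irreducible factors with multiplicity. Since `h₁` is the Gauss sum and
`hₙ = 0` for `n ≥ 2`, the identities determine the `pₙ`.
-/

namespace TraceNormCode

open Polynomial Finset UniqueFactorizationMonoid

section MonicPolynomials

section Factorization

variable {F : Type*} [Field F] {P Q : F[X]}

open scoped Classical in
lemma pow_dvd_iff_le_count_normalizedFactors (hP : P.Monic) (hirr : Irreducible P) (hQ : Q ≠ 0)
    (i : ℕ) : P ^ i ∣ Q ↔ i ≤ (normalizedFactors Q).count P := by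
  rw [pow_dvd_iff_le_emultiplicity, emultiplicity_eq_count_normalizedFactors hirr hQ,
    hP.normalize_eq_self, Nat.cast_le]

open scoped Classical in
lemma natDegree_eq_sum_count_normalizedFactors (hQ : Q.Monic) :
    Q.natDegree = ∑ P ∈ (normalizedFactors Q).toFinset,
      (normalizedFactors Q).count P * P.natDegree := by
  have hprod : (normalizedFactors Q).prod = Q := by
    simpa [hQ.leadingCoeff] using leadingCoeff_mul_prod_normalizedFactors Q
  conv_lhs => rw [← hprod, natDegree_multiset_prod _ (zero_notMem_normalizedFactors Q),
    sum_multiset_map_count]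
  rfl

end Factorization

variable (F : Type*) [Field F] [Finite F]

lemma finite_monic_natDegree_eq (n : ℕ) : {P : F[X] | P.Monic ∧ P.natDegree = n}.Finite :=
  Finite.of_equiv _ ((monicEquivDegreeLT n).trans (degreeLTEquiv F n).toEquiv).symm

/-- The monic polynomials of degree `n` over a finite field. -/
noncomputable def monicsOfDegree (n : ℕ) : Finset F[X] :=
  (finite_monic_natDegree_eq F n).toFinset

open scoped Classical in
/-- The monic irreducible polynomials over a finite field whose degree divides `n`; for `n > 0`,
these are the minimal polynomials of the elements of the extension of degree `n`. The set is empty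
for `n = 0`, by the convention on `Nat.divisors`. -/
noncomputable def irreduciblesOfDegreeDvd (n : ℕ) : Finset F[X] :=
  {P ∈ n.divisors.biUnion (monicsOfDegree F) | Irreducible P}

variable {F} {n : ℕ} {P Q : F[X]}

@[simp]
lemma mem_monicsOfDegree : P ∈ monicsOfDegree F n ↔ P.Monic ∧ P.natDegree = n := by
  simp [monicsOfDegree]

lemma mem_irreduciblesOfDegreeDvd :
    P ∈ irreduciblesOfDegreeDvd F n ↔ P.Monic ∧ Irreducible P ∧ P.natDegree ∈ n.divisors := by
  simp only [irreduciblesOfDegreeDvd, mem_filter, mem_biUnion, mem_monicsOfDegree]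
  exact ⟨fun ⟨⟨_, hd, hP, hdeg⟩, hirr⟩ ↦ ⟨hP, hirr, hdeg ▸ hd⟩,
    fun ⟨hP, hirr, hd⟩ ↦ ⟨⟨_, hd, hP, rfl⟩, hirr⟩⟩

lemma natDegree_pow_of_mem_irreduciblesOfDegreeDvd (hP : P ∈ irreduciblesOfDegreeDvd F n) :
    (P ^ (n / P.natDegree)).natDegree = n := by
  obtain ⟨-, -, hd⟩ := mem_irreduciblesOfDegreeDvd.1 hP
  rw [natDegree_pow, Nat.div_mul_cancel (Nat.dvd_of_mem_divisors hd)]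

lemma monicsOfDegree_zero : monicsOfDegree F 0 = {1} := by
  ext P
  rw [mem_monicsOfDegree, mem_singleton]
  exact ⟨fun ⟨hP, hdeg⟩ ↦ hP.natDegree_eq_zero.1 hdeg, by rintro rfl; simp⟩

lemma sum_monicsOfDegree_coeff {M : Type*} [AddCommMonoid M] [Fintype F] (n : ℕ)
    (h : (Fin n → F) → M) :
    ∑ P ∈ monicsOfDegree F n, h (fun i ↦ P.coeff i) = ∑ c, h c := by
  let e := (monicEquivDegreeLT (R := F) n).trans (degreeLTEquiv F n).toEquiv
  have he (P) : e P = fun i : Fin n ↦ P.1.coeff i := by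
    funext i
    exact eraseLead_coeff_of_ne _ (P.2.2.symm ▸ i.2.ne)
  refine sum_bij' (fun P hP ↦ e ⟨P, mem_monicsOfDegree.1 hP⟩) (fun c _ ↦ e.symm c) (by simp)
    (fun c _ ↦ mem_monicsOfDegree.2 (e.symm c).2) (by simp) (by simp) fun P hP ↦ by rw [he]

open scoped Classical in
lemma natDegree_eq_sum_pow_dvd (hQ : Q.Monic) :
    Q.natDegree = ∑ r ∈ range (Q.natDegree + 1),
      ∑ P ∈ irreduciblesOfDegreeDvd F r with P ^ (r / P.natDegree) ∣ Q, P.natDegree := by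
  have hQ0 := hQ.ne_zero
  have mem_factors {P : F[X]} :
      P ∈ (normalizedFactors Q).toFinset ↔ Irreducible P ∧ P.Monic ∧ P ∣ Q :=
    Multiset.mem_toFinset.trans (Polynomial.mem_normalizedFactors_iff hQ0)
  have hcount : Q.natDegree = ∑ P ∈ (normalizedFactors Q).toFinset,
      ∑ _i ∈ Icc 1 ((normalizedFactors Q).count P), P.natDegree := by
    simpa only [sum_const, Nat.card_Icc, Nat.add_sub_cancel, smul_eq_mul] using
      natDegree_eq_sum_count_normalizedFactors hQ
  conv_lhs => rw [hcount]
  rw [sum_sigma', sum_sigma']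
  refine sum_bij' (fun x _ ↦ ⟨x.2 * x.1.natDegree, x.1⟩) (fun y _ ↦ ⟨y.2, y.1 / y.2.natDegree⟩)
    ?_ ?_ ?_ ?_ fun _ _ ↦ rfl
  · rintro ⟨P, i⟩ h
    simp only [mem_sigma, mem_factors, mem_Icc] at h
    obtain ⟨⟨hirr, hP, -⟩, hi, hic⟩ := h
    have hdvd := (pow_dvd_iff_le_count_normalizedFactors hP hirr hQ0 i).2 hic
    have hle := natDegree_le_of_dvd hdvd hQ0
    rw [natDegree_pow] at hle
    simp [mem_irreduciblesOfDegreeDvd, hP, hirr, hirr.natDegree_pos.ne', hdvd,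
      Nat.lt_succ_of_le hle, Nat.one_le_iff_ne_zero.1 hi]
  · rintro ⟨r, P⟩ h
    simp only [mem_sigma, mem_filter, mem_irreduciblesOfDegreeDvd, Nat.mem_divisors] at h
    obtain ⟨-, ⟨hP, hirr, hdvd, hr⟩, hpow⟩ := h
    have hi : 0 < r / P.natDegree := Nat.div_pos (Nat.le_of_dvd (by lia) hdvd) hirr.natDegree_pos
    rw [mem_sigma, mem_factors, mem_Icc]
    exact ⟨⟨hirr, hP, (dvd_pow_self P hi.ne').trans hpow⟩, hi,
      (pow_dvd_iff_le_count_normalizedFactors hP hirr hQ0 _).1 hpow⟩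
  · rintro ⟨P, i⟩ h
    rw [mem_sigma, mem_factors] at h
    simp [h.1.1.natDegree_pos]
  · rintro ⟨r, P⟩ h
    simp only [mem_sigma, mem_filter, mem_irreduciblesOfDegreeDvd] at h
    simp [Nat.div_mul_cancel (Nat.dvd_of_mem_divisors h.2.1.2.2)]

variable {R : Type*} [CommSemiring R] {f : F[X] → R}

open scoped Classical in
lemma sum_monicsOfDegree_filter_dvd
    (hf : ∀ P Q : F[X], P.Monic → Q.Monic → f (P * Q) = f P * f Q) (hP : P.Monic) (n : ℕ) :
    ∑ Q ∈ monicsOfDegree F (P.natDegree + n) with P ∣ Q, f Q =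
      f P * ∑ Q ∈ monicsOfDegree F n, f Q := by
  rw [mul_sum]
  symm
  refine sum_bij (fun Q _ ↦ P * Q) ?_ ?_ ?_ ?_
  · intro Q hQ
    obtain ⟨hmonic, rfl⟩ := mem_monicsOfDegree.1 hQ
    simp [hP.mul hmonic, hP.natDegree_mul hmonic]
  · exact fun _ _ _ _ h ↦ mul_left_cancel₀ hP.ne_zero h
  · intro PQ h
    obtain ⟨⟨hPQ, hdeg⟩, Q, rfl⟩ : (PQ.Monic ∧ _) ∧ P ∣ PQ := by simpa using h
    have hQ := hP.of_mul_monic_left hPQ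
    rw [hP.natDegree_mul hQ, Nat.add_left_cancel_iff] at hdeg
    exact ⟨Q, mem_monicsOfDegree.2 ⟨hQ, hdeg⟩, rfl⟩
  · exact fun Q hQ ↦ (hf P Q hP (mem_monicsOfDegree.1 hQ).1).symm

theorem natCast_mul_sum_monicsOfDegree
    (hf : ∀ P Q : F[X], P.Monic → Q.Monic → f (P * Q) = f P * f Q) (n : ℕ) :
    n * ∑ Q ∈ monicsOfDegree F n, f Q = ∑ x ∈ antidiagonal n,
      (∑ P ∈ irreduciblesOfDegreeDvd F x.1, P.natDegree * f (P ^ (x.1 / P.natDegree))) *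
        ∑ Q ∈ monicsOfDegree F x.2, f Q := by
  classical
  rw [Nat.sum_antidiagonal_eq_sum_range_succ_mk]
  calc n * ∑ Q ∈ monicsOfDegree F n, f Q
      = ∑ Q ∈ monicsOfDegree F n, ∑ r ∈ range (n + 1), ∑ P ∈ irreduciblesOfDegreeDvd F r,
          if P ^ (r / P.natDegree) ∣ Q then P.natDegree * f Q else 0 := by
        rw [mul_sum]
        refine sum_congr rfl fun Q hQ ↦ ?_
        obtain ⟨hmonic, rfl⟩ := mem_monicsOfDegree.1 hQ
        conv_lhs => rw [natDegree_eq_sum_pow_dvd hmonic]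
        simp_rw [Nat.cast_sum, sum_mul, sum_filter]
    _ = ∑ r ∈ range (n + 1), ∑ P ∈ irreduciblesOfDegreeDvd F r, P.natDegree *
          ∑ Q ∈ monicsOfDegree F n with P ^ (r / P.natDegree) ∣ Q, f Q := by
        rw [sum_comm]
        refine sum_congr rfl fun r _ ↦ ?_
        rw [sum_comm]
        simp_rw [mul_sum, sum_filter]
    _ = _ := by
        refine sum_congr rfl fun r hr ↦ ?_
        rw [sum_mul]
        refine sum_congr rfl fun P hP ↦ ?_
        have hdeg := natDegree_pow_of_mem_irreduciblesOfDegreeDvd hP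
        have hsum := sum_monicsOfDegree_filter_dvd hf
          ((mem_irreduciblesOfDegreeDvd.1 hP).1.pow (r / P.natDegree)) (n - r)
        rw [hdeg, Nat.add_sub_cancel' (mem_range_succ_iff.1 hr)] at hsum
        rw [hsum, mul_assoc]

end MonicPolynomials

section MinimalPolynomials

variable {F K : Type*} [Field F] [Field K] [Algebra F K]

lemma norm_eq_coeff_zero_minpoly_pow [FiniteDimensional F K] (x : K) :
    Algebra.norm F x = ((-1) ^ (minpoly F x).natDegree * (minpoly F x).coeff 0) ^
      (Module.finrank F K / (minpoly F x).natDegree) := by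
  have hx : IsIntegral F x := .of_finite F x
  have hgen := Algebra.PowerBasis.norm_gen_eq_coeff_zero_minpoly
    (IntermediateField.adjoin.powerBasis hx)
  rw [IntermediateField.adjoin.powerBasis_gen, IntermediateField.minpoly_gen,
    IntermediateField.adjoin.powerBasis_dim] at hgen
  rw [Algebra.norm_eq_norm_adjoin, hgen, ← IntermediateField.adjoin.finrank hx,
    Module.finrank_div_finrank_cancel_left_of_nontrivial]

lemma trace_eq_nsmul_neg_nextCoeff_minpoly [FiniteDimensional F K] (x : K) :
    Algebra.trace F K x =
      (Module.finrank F K / (minpoly F x).natDegree) • -(minpoly F x).nextCoeff := by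
  rw [trace_eq_finrank_mul_minpoly_nextCoeff, nsmul_eq_mul,
    ← IntermediateField.adjoin.finrank (.of_finite F x),
    Module.finrank_div_finrank_cancel_left_of_nontrivial]

variable [Finite F]

lemma card_minpoly_eq [Fintype K] [DecidableEq F[X]] {P : F[X]}
    (hP : P ∈ irreduciblesOfDegreeDvd F (Module.finrank F K)) :
    #{x : K | minpoly F x = P} = P.natDegree := by
  have := Fintype.ofFinite F
  obtain ⟨hmonic, hirr, hdeg⟩ := mem_irreduciblesOfDegreeDvd.1 hP
  have hdvd : P ∣ X ^ Fintype.card K - X := by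
    rw [Module.card_eq_pow_finrank (K := F), ← Nat.card_eq_fintype_card]
    exact hirr.natDegree_dvd_iff_dvd_X_pow_card_pow_sub_X.1 (Nat.dvd_of_mem_divisors hdeg)
  have hsplits : (P.map (algebraMap F K)).Splits :=
    (FiniteField.isSplittingField_sub K F).splits.of_dvd
      (Polynomial.map_ne_zero (FiniteField.X_pow_card_sub_X_ne_zero _ Fintype.one_lt_card))
      (Polynomial.map_dvd _ hdvd)
  rw [← card_rootSet_eq_natDegree (PerfectField.separable_of_irreducible hirr) hsplits,
    ← Set.toFinset_card]
  congr 1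
  ext x
  rw [mem_filter_univ, Set.mem_toFinset, mem_rootSet_of_ne hmonic.ne_zero]
  exact ⟨by rintro rfl; exact minpoly.aeval F x,
    fun hx ↦ (minpoly.eq_of_irreducible_of_monic hirr hx hmonic).symm⟩

lemma sum_minpoly [Fintype K] {M : Type*} [AddCommMonoid M] (g : F[X] → M) :
    ∑ x : K, g (minpoly F x) =
      ∑ P ∈ irreduciblesOfDegreeDvd F (Module.finrank F K), P.natDegree • g P := by
  classical
  have hmem (x : K) : minpoly F x ∈ irreduciblesOfDegreeDvd F (Module.finrank F K) := by
    have hx : IsIntegral F x := .of_finite F x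
    rw [mem_irreduciblesOfDegreeDvd, Nat.mem_divisors]
    exact ⟨minpoly.monic hx, minpoly.irreducible hx, minpoly.degree_dvd hx, Module.finrank_pos.ne'⟩
  rw [← sum_fiberwise_of_maps_to fun x _ ↦ hmem x]
  refine sum_congr rfl fun P hP ↦ ?_
  rw [sum_congr rfl fun x hx ↦ by rw [(mem_filter.1 hx).2], sum_const, card_minpoly_eq hP]

end MinimalPolynomials

section HasseDavenport

section PolynomialCharacter

variable {F R : Type*} [Field F] [CommRing R] (χ : MulChar F R) (ψ : AddChar F R)

/-- The product of a multiplicative and an additive character as a function of monic polynomials: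
if `P = ∏ (X - xᵢ)`, this is `χ (∏ xᵢ) * ψ (∑ xᵢ)`. -/
noncomputable def polynomialChar (P : F[X]) : R :=
  χ ((-1) ^ P.natDegree * P.coeff 0) * ψ (-P.nextCoeff)

variable {P Q : F[X]}

lemma polynomialChar_mul (hP : P.Monic) (hQ : Q.Monic) :
    polynomialChar χ ψ (P * Q) = polynomialChar χ ψ P * polynomialChar χ ψ Q := by
  have hconst : (-1) ^ (P * Q).natDegree * (P * Q).coeff 0 =
      ((-1) ^ P.natDegree * P.coeff 0) * ((-1) ^ Q.natDegree * Q.coeff 0) := by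
    rw [hP.natDegree_mul hQ, mul_coeff_zero]
    ring
  simp only [polynomialChar]
  rw [hconst, map_mul, hP.nextCoeff_mul hQ, neg_add, AddChar.map_add_eq_mul, mul_mul_mul_comm]

lemma polynomialChar_one : polynomialChar χ ψ 1 = 1 := by
  simp [polynomialChar, nextCoeff]

lemma polynomialChar_pow (hP : P.Monic) (n : ℕ) :
    polynomialChar χ ψ (P ^ n) = polynomialChar χ ψ P ^ n := by
  induction n with
  | zero => rw [pow_zero, pow_zero, polynomialChar_one]
  | succ n ih => rw [pow_succ, polynomialChar_mul χ ψ (hP.pow n) hP, ih, pow_succ]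

lemma sum_polynomialChar_monicsOfDegree_zero [Finite F] :
    ∑ P ∈ monicsOfDegree F 0, polynomialChar χ ψ P = 1 := by
  rw [monicsOfDegree_zero, sum_singleton, polynomialChar_one]

lemma sum_polynomialChar_monicsOfDegree_succ [Fintype F] (n : ℕ) :
    ∑ P ∈ monicsOfDegree F (n + 1), polynomialChar χ ψ P =
      ∑ c : Fin (n + 1) → F, χ ((-1) ^ (n + 1) * c 0) * ψ (-c (Fin.last n)) := by
  rw [← sum_monicsOfDegree_coeff]
  refine sum_congr rfl fun P hP ↦ ?_
  obtain ⟨-, hdeg⟩ := mem_monicsOfDegree.1 hP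
  simp [polynomialChar, nextCoeff, hdeg]

lemma sum_polynomialChar_monicsOfDegree_one [Fintype F] :
    ∑ P ∈ monicsOfDegree F 1, polynomialChar χ ψ P = gaussSum χ ψ := by
  rw [sum_polynomialChar_monicsOfDegree_succ, gaussSum]
  exact Fintype.sum_equiv ((Equiv.funUnique (Fin 1) F).trans (Equiv.neg F)) _ _ fun c ↦ by simp

variable {χ} in
lemma sum_polynomialChar_monicsOfDegree_add_two [Finite F] [IsDomain R] (hχ : χ ≠ 1) (n : ℕ) :
    ∑ P ∈ monicsOfDegree F (n + 2), polynomialChar χ ψ P = 0 := by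
  have := Fintype.ofFinite F
  rw [sum_polynomialChar_monicsOfDegree_succ]
  calc _ = ∑ x : F × (Fin (n + 1) → F), χ ((-1) ^ (n + 2)) * χ x.1 * ψ (-x.2 (Fin.last n)) :=
        (Fintype.sum_equiv (Fin.consEquiv fun _ ↦ F) _ _ fun x ↦ by
          rw [← Fin.succ_last]; simp [Fin.consEquiv]).symm
    _ = χ ((-1) ^ (n + 2)) * (∑ x, χ x) * ∑ c : Fin (n + 1) → F, ψ (-c (Fin.last n)) := by
        rw [Fintype.sum_prod_type, mul_sum (f := χ), sum_mul_sum]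
    _ = 0 := by rw [MulChar.sum_eq_zero_of_ne_one hχ, mul_zero, zero_mul]

end PolynomialCharacter

section LiftedCharacters

variable {F R : Type*} (K : Type*) [Field F] [Field K] [Algebra F K] [CommRing R]

/-- The lift of a multiplicative character to a finite extension field along the norm. -/
noncomputable def normLift [FiniteDimensional F K] (χ : MulChar F R) : MulChar K R where
  toMonoidHom := χ.toMonoidHom.comp (Algebra.norm F)
  map_nonunit' x hx := by
    obtain rfl : x = 0 := by simpa using hx
    exact (congrArg χ Algebra.norm_zero).trans χ.map_zero

/-- The lift of an additive character to an extension field along the trace. -/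
noncomputable def traceLift (ψ : AddChar F R) : AddChar K R :=
  ψ.compAddMonoidHom (Algebra.trace F K).toAddMonoidHom

variable {K}

@[simp]
lemma traceLift_apply (ψ : AddChar F R) (x : K) : traceLift K ψ x = ψ (Algebra.trace F K x) := rfl

lemma traceLift_traceLift {L : Type*} [Field L] [Algebra F L] [Algebra K L] [IsScalarTower F K L]
    [FiniteDimensional F K] [FiniteDimensional K L] (ψ : AddChar F R) :
    traceLift L (traceLift K ψ) = traceLift L ψ := by
  ext x
  simp only [traceLift_apply, Algebra.trace_trace]

lemma traceLift_ne_one [FiniteDimensional F K] [Algebra.IsSeparable F K] {ψ : AddChar F R}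
    (hψ : ψ ≠ 1) : traceLift K ψ ≠ 1 := by
  obtain ⟨t, ht⟩ := AddChar.ne_one_iff.1 hψ
  obtain ⟨x, rfl⟩ := Algebra.trace_surjective F K t
  exact AddChar.ne_one_iff.2 ⟨x, ht⟩

variable [FiniteDimensional F K]

@[simp]
lemma normLift_apply (χ : MulChar F R) (x : K) : normLift K χ x = χ (Algebra.norm F x) := rfl

@[simp]
lemma normLift_one : normLift K (1 : MulChar F R) = 1 := by
  ext x
  rw [normLift_apply, MulChar.one_apply_coe, MulChar.one_apply (x.isUnit.map (Algebra.norm F))]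

lemma normLift_inv (χ : MulChar F R) : normLift K χ⁻¹ = (normLift K χ)⁻¹ := by
  ext x
  rw [normLift_apply, MulChar.inv_apply_eq_inv, MulChar.inv_apply_eq_inv, normLift_apply]

lemma normLift_ne_one [Finite K] {χ : MulChar F R} (hχ : χ ≠ 1) : normLift K χ ≠ 1 := by
  obtain ⟨u, hu⟩ := MulChar.ne_one_iff.1 hχ
  obtain ⟨x, hx⟩ := FiniteField.unitsMap_norm_surjective F K u
  refine MulChar.ne_one_iff.2 ⟨x, ?_⟩
  rwa [← hx, Units.coe_map, ← normLift_apply] at hu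

lemma normLift_mul_traceLift (χ : MulChar F R) (ψ : AddChar F R) (x : K) :
    normLift K χ x * traceLift K ψ x =
      polynomialChar χ ψ (minpoly F x ^ (Module.finrank F K / (minpoly F x).natDegree)) := by
  rw [polynomialChar_pow χ ψ (minpoly.monic (.of_finite F x)), polynomialChar, mul_pow, ← map_pow,
    ← AddChar.map_nsmul_eq_pow, ← norm_eq_coeff_zero_minpoly_pow,
    ← trace_eq_nsmul_neg_nextCoeff_minpoly, normLift_apply, traceLift_apply]

lemma gaussSum_normLift_traceLift_eq_sum [Finite F] [Fintype K] (χ : MulChar F R)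
    (ψ : AddChar F R) :
    gaussSum (normLift K χ) (traceLift K ψ) =
      ∑ P ∈ irreduciblesOfDegreeDvd F (Module.finrank F K),
        P.natDegree * polynomialChar χ ψ (P ^ (Module.finrank F K / P.natDegree)) := by
  simp_rw [gaussSum, normLift_mul_traceLift, ← nsmul_eq_mul]
  exact sum_minpoly fun P ↦ polynomialChar χ ψ (P ^ (Module.finrank F K / P.natDegree))

end LiftedCharacters

lemma eq_neg_one_pow_mul_pow_of_newton {R : Type*} [CommRing R] {h p : ℕ → R} {g : R}
    (h_zero : h 0 = 1) (h_one : h 1 = g) (h_add_two : ∀ n, h (n + 2) = 0) (p_zero : p 0 = 0)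
    (newton : ∀ n : ℕ, n * h n = ∑ x ∈ antidiagonal n, p x.1 * h x.2) (n : ℕ) :
    p (n + 1) = (-1) ^ n * g ^ (n + 1) := by
  induction n with
  | zero => simpa [h_zero, h_one, p_zero, Nat.antidiagonal_succ] using (newton 1).symm
  | succ n ih =>
    have hn := newton (n + 2)
    rw [Nat.sum_antidiagonal_eq_sum_range_succ_mk, sum_range_succ, sum_range_succ,
      sum_eq_zero fun r hr ↦ ?_, h_add_two] at hn
    · rw [show n + 2 - (n + 1) = 1 by lia, Nat.sub_self, h_one, h_zero, ih] at hn
      linear_combination -hn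
    · rw [mem_range] at hr
      rw [show n + 2 - r = n - r + 2 by lia, h_add_two, mul_zero]

theorem gaussSum_normLift_traceLift {F K R : Type*} [Field F] [Fintype F] [Field K] [Fintype K]
    [Algebra F K] [CommRing R] [IsDomain R] {χ : MulChar F R} (hχ : χ ≠ 1)
    (ψ : AddChar F R) :
    gaussSum (normLift K χ) (traceLift K ψ) =
      (-1) ^ (Module.finrank F K - 1) * gaussSum χ ψ ^ Module.finrank F K := by
  obtain ⟨n, hn⟩ := Nat.exists_eq_add_one.2 (Module.finrank_pos (R := F) (M := K))
  rw [gaussSum_normLift_traceLift_eq_sum, hn]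
  exact eq_neg_one_pow_mul_pow_of_newton (sum_polynomialChar_monicsOfDegree_zero χ ψ)
    (sum_polynomialChar_monicsOfDegree_one χ ψ) (sum_polynomialChar_monicsOfDegree_add_two ψ hχ)
    (p := fun r ↦ ∑ P ∈ irreduciblesOfDegreeDvd F r,
      P.natDegree * polynomialChar χ ψ (P ^ (r / P.natDegree))) (by simp [irreduciblesOfDegreeDvd])
    (natCast_mul_sum_monicsOfDegree fun P Q hP hQ ↦ polynomialChar_mul χ ψ hP hQ) n

end HasseDavenport

section CyclicGroups

lemma mem_subgroup_iff_pow_card_eq_one {G : Type*} [CommGroup G] [IsCyclic G] [Finite G]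
    (H : Subgroup G) (x : G) : x ∈ H ↔ x ^ Nat.card H = 1 := by
  classical
  have := Fintype.ofFinite G
  have hsub : (H : Set G).toFinset ⊆ ({x : G | x ^ Nat.card H = 1} : Finset G) := fun x hx ↦ by
    rw [Set.mem_toFinset] at hx
    exact mem_filter_univ _ |>.2 (orderOf_dvd_iff_pow_eq_one.1 (H.orderOf_dvd_natCard hx))
  have heq := eq_of_subset_of_card_le hsub <| by
    rw [← Set.ncard_eq_toFinset_card']
    exact IsCyclic.card_pow_eq_one_le Nat.card_pos
  simpa using congrArg (x ∈ ·) heq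

variable {M R : Type*} [CommMonoid M] [IsCyclic Mˣ] [Finite Mˣ] {H : Subgroup Mˣ}

lemma apply_eq_one_iff_mem_of_orderOf_mul_card [CommMonoidWithZero R] {χ : MulChar M R}
    (hχ : orderOf χ * Nat.card H = Nat.card Mˣ) (u : Mˣ) : χ u = 1 ↔ u ∈ H := by
  obtain ⟨g, hg⟩ := IsCyclic.exists_generator (α := Mˣ)
  obtain ⟨i, rfl⟩ := Submonoid.mem_powers_iff _ _ |>.1 (mem_powers_iff_mem_zpowers.2 (hg u))
  rw [mem_subgroup_iff_pow_card_eq_one, ← pow_mul, ← orderOf_dvd_iff_pow_eq_one,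
    orderOf_eq_card_of_forall_mem_zpowers hg, ← hχ, Nat.mul_dvd_mul_iff_right Nat.card_pos,
    orderOf_dvd_iff_pow_eq_one, MulChar.eq_iff hg, MulChar.one_apply_coe, MulChar.pow_apply_coe,
    Units.val_pow_eq_pow_val, map_pow]

open scoped Classical in
lemma sum_pow_apply_of_orderOf_mul_card [CommRing R] [IsDomain R] {χ : MulChar M R}
    (hχ : orderOf χ * Nat.card H = Nat.card Mˣ) (u : Mˣ) :
    ∑ j ∈ range (orderOf χ), (χ ^ j) u = if u ∈ H then (orderOf χ : R) else 0 := by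
  simp_rw [MulChar.pow_apply_coe]
  split_ifs with hu
  · simp [(apply_eq_one_iff_mem_of_orderOf_mul_card hχ u).2 hu]
  · have hne : χ u - 1 ≠ 0 :=
      sub_ne_zero.2 fun h ↦ hu ((apply_eq_one_iff_mem_of_orderOf_mul_card hχ u).1 h)
    refine eq_zero_of_ne_zero_of_mul_right_eq_zero hne ?_
    rw [geom_sum_mul, ← MulChar.pow_apply_coe, pow_orderOf_eq_one, MulChar.one_apply_coe, sub_self]

end CyclicGroups

section TraceIndicator

lemma gaussSum_eq_sum_units {A R : Type*} [CommRing A] [Fintype A] [Fintype Aˣ] [CommRing R]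
    (χ : MulChar A R) (ψ : AddChar A R) : gaussSum χ ψ = ∑ u : Aˣ, χ u * ψ u := by
  refine (Fintype.sum_of_injective _ Units.val_injective _ _ (fun x hx ↦ ?_) fun _ ↦ rfl).symm
  rw [χ.map_nonunit fun ⟨u, hu⟩ ↦ hx ⟨u, hu⟩, zero_mul]

lemma traceLift_mulShift_compAddMonoidHom {k F R : Type*} [Field k] [Field F]
    [Algebra k F] [CommRing R] (ψ : AddChar k R) (z : F) :
    ((traceLift F ψ).mulShift z).compAddMonoidHom (algebraMap k F).toAddMonoidHom =
      ψ.mulShift (Algebra.trace k F z) := by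
  ext y
  simp [mul_comm z, ← Algebra.smul_def, mul_comm _ y]

variable {k F R : Type*} [Field k] [Fintype k] [Field F] [Fintype F] [Algebra k F] [CommRing R]
  [IsDomain R]

lemma gaussSum_one_mulShift [DecidableEq k] {ψ : AddChar k R} (hψ : ψ ≠ 1) (t : k) :
    gaussSum 1 (ψ.mulShift t) = (if t = 0 then (Fintype.card k : R) else 0) - 1 := by
  split_ifs with ht
  · rw [ht, AddChar.mulShift_zero, gaussSum_one_one, Nat.card_units, Nat.card_eq_fintype_card,
      Nat.cast_pred Fintype.card_pos]
  · rw [gaussSum_one_left (AddChar.IsPrimitive.of_ne_one hψ ht), zero_sub]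

lemma sum_gaussSum_pow {χ : MulChar F R} (hχ : orderOf χ * Nat.card kˣ = Nat.card Fˣ)
    (Ω : AddChar F R) :
    ∑ j ∈ range (orderOf χ), gaussSum (χ ^ j) Ω =
      orderOf χ * gaussSum 1 (Ω.compAddMonoidHom (algebraMap k F).toAddMonoidHom) := by
  classical
  have hinj : Function.Injective (Units.map (algebraMap k F).toMonoidHom) :=
    Units.map_injective (algebraMap k F).injective
  have hcard : orderOf χ * Nat.card (Units.map (algebraMap k F).toMonoidHom).range =
      Nat.card Fˣ := by
    rwa [← Nat.card_congr (MonoidHom.ofInjective hinj).toEquiv]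
  calc ∑ j ∈ range (orderOf χ), gaussSum (χ ^ j) Ω
      = ∑ u : Fˣ, (∑ j ∈ range (orderOf χ), (χ ^ j) u) * Ω u := by
        simp_rw [gaussSum_eq_sum_units, sum_mul]
        exact sum_comm
    _ = ∑ y : kˣ, orderOf χ * Ω (algebraMap k F y) := by
        simp_rw [sum_pow_apply_of_orderOf_mul_card hcard]
        refine (Fintype.sum_of_injective _ hinj _ _ (fun u hu ↦ ?_) fun y ↦ ?_).symm
        · rw [if_neg (MonoidHom.mem_range.not.2 hu), zero_mul]
        · rw [if_pos ⟨y, rfl⟩]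
          rfl
    _ = _ := by simp [gaussSum_eq_sum_units, mul_sum]

theorem ite_trace_eq_zero_eq_sum_gaussSum [DecidableEq k] [DecidableEq F] {χ : MulChar F R}
    (hχ : orderOf χ * Nat.card kˣ = Nat.card Fˣ) {ψ : AddChar k R} (hψ : ψ ≠ 1) (z : F) :
    (orderOf χ * Fintype.card k * if z ≠ 0 ∧ Algebra.trace k F z = 0 then 1 else 0 : R) =
      (orderOf χ - 1) * (1 : MulChar F R) z +
        ∑ j ∈ Ico 1 (orderOf χ), gaussSum (χ ^ j)⁻¹ (traceLift F ψ) * (χ ^ j) z := by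
  obtain rfl | hz := eq_or_ne z 0
  · simp [MulChar.map_zero]
  obtain ⟨u, rfl⟩ := hz.isUnit
  have hsum := sum_gaussSum_pow (χ := χ⁻¹) (by rwa [orderOf_inv]) ((traceLift F ψ).mulShift u)
  rw [traceLift_mulShift_compAddMonoidHom, gaussSum_one_mulShift hψ, orderOf_inv] at hsum
  simp_rw [gaussSum_mulShift_eq, inv_pow, inv_inv] at hsum
  have hpos : 0 < orderOf χ := χ.orderOf_pos
  rw [sum_range_eq_add_Ico _ hpos, pow_zero, inv_one, gaussSum_one_left (traceLift_ne_one hψ),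
    MulChar.one_apply_coe] at hsum
  simp only [ne_eq, hz, not_false_eq_true, true_and, MulChar.one_apply_coe, mul_comm (gaussSum _ _)]
  rw [mul_assoc, mul_ite, mul_one, mul_zero]
  linear_combination -hsum

end TraceIndicator

section Weight

lemma card_mul_card_filter_ne_zero {k V R : Type*} [Field k] [Fintype k] [DecidableEq k]
    [MulAction kˣ V] [CommRing R] [IsDomain R] {D : Finset V}
    (hD : ∀ y : kˣ, ∀ d ∈ D, y • d ∈ D) {ℓ : V → k} (hℓ : ∀ (y : kˣ) d, ℓ (y • d) = y * ℓ d)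
    {ψ : AddChar k R} (hψ : ψ ≠ 1) :
    (Fintype.card k * #{d ∈ D | ℓ d ≠ 0} : R) =
      (Fintype.card k - 1) * (#D - ∑ d ∈ D, ψ (ℓ d)) := by
  have hsmul (y : kˣ) : ∑ d ∈ D, ψ (y * ℓ d) = ∑ d ∈ D, ψ (ℓ d) :=
    sum_bij' (fun d _ ↦ y • d) (fun d _ ↦ y⁻¹ • d) (hD y) (hD y⁻¹) (by simp) (by simp)
      (by simp [hℓ])
  have hfilter : ∑ d ∈ D, (if ℓ d = 0 then (Fintype.card k : R) else 0) =
      Fintype.card k * #{d ∈ D | ℓ d = 0} := by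
    rw [← sum_filter, sum_const, nsmul_eq_mul, mul_comm]
  have hsum : ∑ d ∈ D, gaussSum 1 (ψ.mulShift (ℓ d)) =
      (Fintype.card k - 1) * ∑ d ∈ D, ψ (ℓ d) := by
    simp_rw [gaussSum_eq_sum_units, MulChar.one_apply_coe, one_mul, AddChar.mulShift_apply]
    rw [sum_comm]
    simp_rw [mul_comm (ℓ _), hsmul]
    rw [sum_const, card_univ, Fintype.card_units, nsmul_eq_mul, Nat.cast_pred Fintype.card_pos]
  simp_rw [gaussSum_one_mulShift hψ] at hsum
  rw [sum_sub_distrib, hfilter, sum_const, nsmul_one] at hsum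
  have hcard : (#{d ∈ D | ℓ d = 0} + #{d ∈ D | ℓ d ≠ 0} : R) = #D := by
    rw [← Nat.cast_add, card_filter_add_card_filter_not]
  linear_combination Fintype.card k * hcard - hsum

variable (k F K : Type*) [Field k] [Field F] [Field K] [Algebra k F] [Algebra F K]

open scoped Classical in
/-- The defining set of the code: the nonzero elements of `K` whose norm to `F` has trace zero over
`k`. -/
noncomputable def definingSet [Fintype K] : Finset K :=
  {d | d ≠ 0 ∧ Algebra.trace k F (Algebra.norm F d) = 0}

variable {k F K}

lemma smul_mem_definingSet [Fintype K] [Algebra k K] [IsScalarTower k F K] (y : kˣ) {d : K}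
    (hd : d ∈ definingSet k F K) : y • d ∈ definingSet k F K := by
  simp only [definingSet, mem_filter_univ] at hd ⊢
  have hnorm : Algebra.norm F (y • d) = (y : k) ^ Module.finrank F K • Algebra.norm F d := by
    rw [Units.smul_def, ← IsScalarTower.algebraMap_smul F (y : k) d, Algebra.smul_def, map_mul,
      Algebra.norm_algebraMap, ← map_pow, Algebra.smul_def]
  rw [hnorm, map_smul, hd.2, smul_zero]
  exact ⟨(smul_ne_zero_iff_ne y).2 hd.1, rfl⟩

variable [Fintype k] [Fintype F] [Fintype K] {R : Type*} [CommRing R] [IsDomain R]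
  {χ : MulChar F R} {ψ : AddChar k R}

theorem sum_definingSet (hχ : orderOf χ * Nat.card kˣ = Nat.card Fˣ) (hψ : ψ ≠ 1)
    (Ω : AddChar K R) :
    orderOf χ * Fintype.card k * ∑ d ∈ definingSet k F K, Ω d =
      (orderOf χ - 1) * gaussSum 1 Ω + ∑ j ∈ Ico 1 (orderOf χ),
        gaussSum (χ ^ j)⁻¹ (traceLift F ψ) * gaussSum (normLift K (χ ^ j)) Ω := by
  classical
  have hind (d : K) : (orderOf χ * Fintype.card k *
        if d ≠ 0 ∧ Algebra.trace k F (Algebra.norm F d) = 0 then 1 else 0 : R) =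
      (orderOf χ - 1) * (1 : MulChar K R) d + ∑ j ∈ Ico 1 (orderOf χ),
        gaussSum (χ ^ j)⁻¹ (traceLift F ψ) * normLift K (χ ^ j) d := by
    rw [← normLift_one (F := F)]
    simpa only [ne_eq, Algebra.norm_eq_zero_iff, normLift_apply] using
      ite_trace_eq_zero_eq_sum_gaussSum hχ hψ (Algebra.norm F d)
  calc _ = ∑ d : K, (orderOf χ * Fintype.card k *
        if d ≠ 0 ∧ Algebra.trace k F (Algebra.norm F d) = 0 then 1 else 0 : R) * Ω d := by
        simp_rw [definingSet, sum_filter, mul_sum]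
        exact sum_congr rfl fun d _ ↦ by split_ifs <;> ring
    _ = _ := by
        simp_rw [hind, add_mul, sum_add_distrib, sum_mul, gaussSum, mul_assoc, ← mul_sum]
        rw [sum_comm]
        simp_rw [← mul_sum]

lemma pow_ne_one_of_mem_Ico {G : Type*} [Monoid G] {x : G} {j : ℕ} (hj : j ∈ Ico 1 (orderOf x)) :
    x ^ j ≠ 1 :=
  pow_ne_one_of_lt_orderOf (Nat.one_le_iff_ne_zero.1 (mem_Ico.1 hj).1) (mem_Ico.1 hj).2

omit [Fintype F] in
theorem card_definingSet [Finite F] (hχ : orderOf χ * Nat.card kˣ = Nat.card Fˣ) (hψ : ψ ≠ 1) :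
    (orderOf χ * Fintype.card k * #(definingSet k F K) : R) =
      (orderOf χ - 1) * (Fintype.card K - 1) := by
  have := Fintype.ofFinite F
  have hsum := sum_definingSet (K := K) hχ hψ 1
  rw [gaussSum_one_one, Nat.card_units, Nat.card_eq_fintype_card, Nat.cast_pred Fintype.card_pos,
    sum_eq_zero (s := Ico _ _) fun j hj ↦ ?_, add_zero] at hsum
  · simpa using hsum
  · rw [gaussSum_one_right (normLift_ne_one (pow_ne_one_of_mem_Ico hj)), mul_zero]

lemma gaussSum_inv_mul_gaussSum (hχ : χ ≠ 1) {ψ : AddChar F R} (hψ : ψ ≠ 1) :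
    gaussSum χ⁻¹ ψ * gaussSum χ ψ = χ (-1) * Fintype.card F := by
  have hinv : gaussSum χ⁻¹ ψ = χ (-1) * gaussSum χ⁻¹ ψ⁻¹ := by
    rw [← mul_gaussSum_inv_eq_gaussSum, MulChar.inv_apply', inv_neg_one]
  rw [← gaussSum_mul_gaussSum_eq_card hχ (.of_ne_one hψ), hinv]
  ring

lemma gaussSum_inv_mul_gaussSum_normLift_mulShift (hχ : χ ≠ 1) {ψ : AddChar F R} (hψ : ψ ≠ 1)
    {b : K} (hb : b ≠ 0) :
    gaussSum χ⁻¹ ψ * gaussSum (normLift K χ) ((traceLift K ψ).mulShift b) =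
      (-1) ^ (Module.finrank F K - 1) * Fintype.card F *
        (χ (-1) * gaussSum χ ψ ^ (Module.finrank F K - 1) * χ⁻¹ (Algebra.norm F b)) := by
  obtain ⟨u, rfl⟩ := hb.isUnit
  rw [gaussSum_mulShift_eq, ← normLift_inv, normLift_apply, gaussSum_normLift_traceLift hχ,
    ← mul_pow_sub_one (Module.finrank_pos (R := F) (M := K)).ne' (gaussSum χ ψ)]
  linear_combination (-1) ^ (Module.finrank F K - 1) *
    gaussSum χ ψ ^ (Module.finrank F K - 1) * χ⁻¹ (Algebra.norm F (u : K)) *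
    gaussSum_inv_mul_gaussSum hχ hψ

variable [Algebra k K] [IsScalarTower k F K]

theorem sum_definingSet_mulShift (hχ : orderOf χ * Nat.card kˣ = Nat.card Fˣ) (hψ : ψ ≠ 1)
    {b : K} (hb : b ≠ 0) :
    orderOf χ * Fintype.card k *
        ∑ d ∈ definingSet k F K, ψ (Algebra.trace k K (b * d)) =
      1 - orderOf χ + (-1) ^ (Module.finrank F K - 1) * Fintype.card F *
        ∑ j ∈ Ico 1 (orderOf χ), (χ ^ j) (-1) *
          gaussSum (χ ^ j) (traceLift F ψ) ^ (Module.finrank F K - 1) *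
            (χ ^ j)⁻¹ (Algebra.norm F b) := by
  have hshift : (traceLift K ψ).mulShift b ≠ 1 :=
    AddChar.IsPrimitive.of_ne_one (traceLift_ne_one hψ) hb
  have hsum := sum_definingSet (K := K) hχ hψ ((traceLift K ψ).mulShift b)
  rw [gaussSum_one_left hshift, ← traceLift_traceLift (K := F), sum_congr rfl fun j hj ↦
    gaussSum_inv_mul_gaussSum_normLift_mulShift (pow_ne_one_of_mem_Ico hj)
      (traceLift_ne_one hψ) hb, ← mul_sum, traceLift_traceLift] at hsum
  simp only [AddChar.mulShift_apply, traceLift_apply] at hsum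
  rw [hsum]
  ring

theorem card_definingSet_filter_trace_ne_zero [DecidableEq k]
    (hχ : orderOf χ * Nat.card kˣ = Nat.card Fˣ) (hψ : ψ ≠ 1) {b : K} (hb : b ≠ 0) :
    (orderOf χ * Fintype.card k ^ 2 *
        #{d ∈ definingSet k F K | Algebra.trace k K (b * d) ≠ 0} : R) =
      (Fintype.card k - 1) * ((orderOf χ - 1) * Fintype.card K -
        (-1) ^ (Module.finrank F K - 1) * Fintype.card F *
          ∑ j ∈ Ico 1 (orderOf χ), (χ ^ j) (-1) *
            gaussSum (χ ^ j) (traceLift F ψ) ^ (Module.finrank F K - 1) *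
              (χ ^ j)⁻¹ (Algebra.norm F b)) := by
  have hweight := card_mul_card_filter_ne_zero (fun y _ ↦ smul_mem_definingSet (F := F) (K := K) y)
    (ℓ := fun d ↦ Algebra.trace k K (b * d)) (by simp [Units.smul_def]) hψ
  linear_combination orderOf χ * Fintype.card k * hweight + (Fintype.card k - 1) *
    (card_definingSet (K := K) hχ hψ - sum_definingSet_mulShift hχ hψ hb)

end Weight

section CanonicalCharacter

lemma exists_traceLift_eq (p : ℕ) [Fact p.Prime] (k : Type*) {F : Type*} [Field k] [Finite k]
    [Field F] [Finite F] [Algebra k F] [Algebra (ZMod p) F] {χ₁ : AddChar F ℂ}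
    (hχ₁ : ∀ x : F, χ₁ x =
      Complex.exp (2 * Real.pi * Complex.I * ((Algebra.trace (ZMod p) F x).val : ℂ) / p)) :
    ∃ ψ : AddChar k ℂ, ψ ≠ 1 ∧ traceLift F ψ = χ₁ := by
  have : CharP F p := (Algebra.charP_iff (ZMod p) F p).1 (ZMod.charP p)
  have : CharP k p := (Algebra.charP_iff k F p).2 this
  let : Algebra (ZMod p) k := ZMod.algebra k p
  have : IsScalarTower (ZMod p) k F := .of_algebraMap_eq' (Subsingleton.elim _ _)
  refine ⟨traceLift (F := ZMod p) k ZMod.stdAddChar, traceLift_ne_one ?_, ?_⟩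
  · refine AddChar.ne_one_iff.2 ⟨1, fun h ↦ one_ne_zero (α := ZMod p) ?_⟩
    exact ZMod.injective_stdAddChar (by rw [h, AddChar.map_zero_eq_one])
  · ext x
    rw [traceLift_traceLift, traceLift_apply, hχ₁, ZMod.stdAddChar_apply, ZMod.toCircle_apply]

end CanonicalCharacter

end TraceNormCode

open TraceNormCode in
theorem stmt4_general {q f k : ℕ} (hk : 1 < k) {Fq Ff Fk R : Type*} [Field Fq] [Field Ff]
    [Field Fk] [Fintype Fq] [Fintype Ff] [Fintype Fk] [Algebra Fq Ff] [Algebra Ff Fk]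
    [Algebra Fq Fk] [IsScalarTower Fq Ff Fk] [Field R] [CharZero R]
    (hcq : Fintype.card Fq = q) (hcf : Fintype.card Ff = q ^ f) (hck : Fintype.card Fk = q ^ k)
    {ψ : AddChar Fq R} (hψ : ψ ≠ 1) {φ : MulChar Ff R} (hφ : orderOf φ = (q ^ f - 1) / (q - 1))
    {b : Fk} (hb : b ≠ 0) :
    (Nat.card {d : Fk // (d ≠ 0 ∧ Algebra.trace Fq Ff (Algebra.norm Ff d) = 0) ∧
        Algebra.trace Fq Fk (b * d) ≠ 0} : R) =
      (q - 1) * q ^ (k - 2) * (q ^ f - q) / (q ^ f - 1) -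
        (-1) ^ (k / f - 1) * q ^ f * (q - 1) ^ 2 / (q ^ 2 * (q ^ f - 1)) *
          ∑ j ∈ Finset.Icc 1 ((q ^ f - 1) / (q - 1) - 1), (φ ^ j) (-1) *
            gaussSum (φ ^ j) (traceLift Ff ψ) ^ (k / f - 1) * (φ ^ j)⁻¹ (Algebra.norm Ff b) := by
  classical
  have hq : 1 < q := hcq ▸ Fintype.one_lt_card
  have hqf : 1 < q ^ f := hcf ▸ Fintype.one_lt_card
  have hf : f ≠ 0 := by rintro rfl; simp at hqf
  have hm : Module.finrank Ff Fk = k / f := by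
    have hcard := Module.card_eq_pow_finrank (K := Ff) (V := Fk)
    rw [hck, hcf, ← pow_mul] at hcard
    rw [Nat.pow_right_injective hq hcard, Nat.mul_div_cancel_left _ (Nat.pos_of_ne_zero hf)]
  have hN : orderOf φ * (q - 1) = q ^ f - 1 :=
    hφ ▸ Nat.div_mul_cancel (by simpa using Nat.sub_dvd_pow_sub_pow q 1 f)
  have hweight := card_definingSet_filter_trace_ne_zero (K := Fk) (χ := φ)
    (by simpa [Nat.card_units, Fintype.card_units, hcq, hcf] using hN) hψ hb
  rw [definingSet, Finset.filter_filter, ← Fintype.card_subtype, hcq, hcf, hck, hm,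
    ← Nat.card_eq_fintype_card] at hweight
  have hqfR : (q : R) ^ f = orderOf φ * (q - 1) + 1 := by
    simpa [hq.le, hqf.le, sub_eq_iff_eq_add] using (congrArg (Nat.cast (R := R)) hN).symm
  have hq0 : (q : R) ≠ 0 := Nat.cast_ne_zero.2 hq.ne_bot
  have hqf0 : (q : R) ^ f - 1 ≠ 0 := sub_ne_zero.2 (mod_cast hqf.ne')
  have hqk : (q : R) ^ k = q ^ (k - 2) * q ^ 2 := by rw [← pow_add, Nat.sub_add_cancel hk]
  rw [← hφ, Finset.Icc_sub_one_right_eq_Ico_of_not_isMin (by simp [φ.orderOf_pos.ne'])]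
  field_simp
  push_cast [hqk, hqfR] at hweight ⊢
  linear_combination (q - 1) * hweight

/-- **Theorem 1, weight formula.** Let `q` be a power of a prime `p`,
`f ∣ k`, `k > f > 1`, and `D = {x ∈ F_{q^k}ˣ : Tr_{q^f/q}(x^{(q^k-1)/(q^f-1)}) = 0}`.
Let `χ₁` be the canonical additive character of `F_{q^f}` and `φ` a multiplicative
character of `F_{q^f}ˣ` of order `(q^f-1)/(q-1)`.  Then for every `b ∈ F_{q^k}ˣ` the
Hamming weight `w(c_b) = #{d ∈ D : Tr_{q^k/q}(bd) ≠ 0}` satisfies, in `ℂ`,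
`w(c_b) = (q-1)q^{k-2}(q^f-q)/(q^f-1) − ((-1)^{k/f-1} q^f(q-1)²/(q²(q^f-1))) ·
  ∑_{j=1}^{(q^f-1)/(q-1)-1} φ^j(-1) G(φ^j,χ₁)^{k/f-1} conj(φ^j)(b^{(q^k-1)/(q^f-1)})`.
Here `x^{(q^k-1)/(q^f-1)}` is the norm from `Fk` to `Ff` (hypothesis `hnorm`). -/
theorem stmt4 (p e q f k : ℕ) [Fact p.Prime] (he : 0 < e) (hq : q = p ^ e)
    (hf : 1 < f) (hk : f < k) (hfk : f ∣ k)
    (Fq Ff Fk : Type) [Field Fq] [Field Ff] [Field Fk]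
    [Fintype Fq] [Fintype Ff] [Fintype Fk]
    [Algebra Fq Ff] [Algebra Ff Fk] [Algebra Fq Fk] [IsScalarTower Fq Ff Fk]
    [Algebra (ZMod p) Ff]
    (hcq : Fintype.card Fq = q) (hcf : Fintype.card Ff = q ^ f)
    (hck : Fintype.card Fk = q ^ k)
    (hnorm : ∀ x : Fk,
      algebraMap Ff Fk (Algebra.norm Ff x) = x ^ ((q ^ k - 1) / (q ^ f - 1)))
    (χ₁ : AddChar Ff ℂ)
    (hχ₁ : ∀ x : Ff, χ₁ x =
      Complex.exp (2 * Real.pi * Complex.I * ((Algebra.trace (ZMod p) Ff x).val : ℂ) / p))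
    (φ : MulChar Ff ℂ) (hφ : orderOf φ = (q ^ f - 1) / (q - 1))
    (b : Fk) (hb : b ≠ 0) :
    (Nat.card {d : Fk // (d ≠ 0 ∧ Algebra.trace Fq Ff (Algebra.norm Ff d) = 0) ∧
        Algebra.trace Fq Fk (b * d) ≠ 0} : ℂ)
      = ((q : ℂ) - 1) * (q : ℂ) ^ (k - 2) * ((q : ℂ) ^ f - q) / ((q : ℂ) ^ f - 1) -
        (-1 : ℂ) ^ (k / f - 1) * (q : ℂ) ^ f * ((q : ℂ) - 1) ^ 2 /
            ((q : ℂ) ^ 2 * ((q : ℂ) ^ f - 1)) *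
          ∑ j ∈ Finset.Icc 1 ((q ^ f - 1) / (q - 1) - 1),
            (φ ^ j) (-1) * gaussSum (φ ^ j) χ₁ ^ (k / f - 1) *
              (starRingEnd ℂ) ((φ ^ j) (Algebra.norm Ff b)) := by
  obtain ⟨ψ, hψ, rfl⟩ := TraceNormCode.exists_traceLift_eq p Fq hχ₁
  simpa only [starRingEnd_apply, MulChar.star_apply'] using
    stmt4_general (hf.trans hk) hcq hcf hck hψ hφ hb
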